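/- Let G : F_{2^8} → F_{2^8} be given by G(x) = x^{254} + x^{16}. Then there exists c ∈ F_{2^8} with c ≠ 1 such that the c-differential uniformity of G satisfies δ_{G,c} ≥ 18. -/

import Mathlib

open Finset

/-- The `(c,a,b)` entry of the `c`-Difference Distribution Table of `G`:
the number of `x` with `G (x + a) - c * G x = b`. -/
def cddt {F : Type*} [Field F] [Fintype F] [DecidableEq F]
    (G : F → F) (c a b : F) : ℕ :=
  (Finset.univ.filter fun x : F => G (x + a) - c * G x = b).card

/-- The `c`-differential uniformity of `G`: the maximum entry of the `c`-DDT,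
where `a ≠ 0` is required only when `c = 1`. -/
def cdu {F : Type*} [Field F] [Fintype F] [DecidableEq F]
    (G : F → F) (c : F) : ℕ :=
  ((Finset.univ : Finset (F × F)).filter fun p => c = 1 → p.1 ≠ 0).sup
    fun p => cddt G c p.1 p.2

/-!
Taking `a = 0`, the equation `G (x + a) - c * G x = b` becomes `(1 - c) * G x = b`, so for `c ≠ 1`
every fibre of `G` is counted by an entry of the `c`-DDT. For `G x = x⁻¹ - x ^ k` the fibre over `0`
consists of `0` and the `(k + 1)`-th roots of unity. In `F_{2^8}` with `k = 16` there are `17` such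
roots, because `17 ∣ 255`.
-/

theorem card_filter_eq_le_cdu {F : Type*} [Field F] [Fintype F] [DecidableEq F]
    (G : F → F) {c : F} (hc : c ≠ 1) (b : F) : #{x | G x = b} ≤ cdu G c := by
  have h_entry : cddt G c 0 ((1 - c) * b) = #{x | G x = b} := by
    simp only [cddt, add_zero, ← one_sub_mul, mul_right_inj' (sub_ne_zero.2 hc.symm)]
  rw [← h_entry]
  exact le_sup (f := fun p : F × F => cddt G c p.1 p.2) (b := (0, (1 - c) * b)) (by simp [hc])

theorem pow_card_sub_two_eq_inv {M : Type*} [GroupWithZero M] [Fintype M]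
    (hM : 2 < Fintype.card M) (x : M) : x ^ (Fintype.card M - 2) = x⁻¹ := by
  obtain rfl | hx := eq_or_ne x 0
  · rw [zero_pow (Nat.sub_ne_zero_of_lt hM), inv_zero]
  · apply eq_inv_of_mul_eq_one_left
    rw [← pow_succ, show Fintype.card M - 2 + 1 = Fintype.card M - 1 by lia,
      FiniteField.pow_card_sub_one_eq_one x hx]

theorem card_filter_pow_eq_one {F : Type*} [Field F] [Fintype F] [DecidableEq F]
    {n : ℕ} (hn : n ≠ 0) : #{x : F | x ^ n = 1} = (Fintype.card F - 1).gcd n := by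
  have h_units : ({x | x ^ n = 1} : Finset F) =
      ({u | u ^ n = 1} : Finset Fˣ).map ⟨Units.val, Units.val_injective⟩ := by
    ext x
    simp only [mem_filter_univ, mem_map, Function.Embedding.coeFn_mk]
    constructor
    · intro hx
      exact ⟨Units.ofPowEqOne x n hx hn, Units.pow_ofPowEqOne hx hn, rfl⟩
    · rintro ⟨u, hu, rfl⟩
      rw [← Units.val_pow_eq_pow_val, hu, Units.val_one]
  calc #{x : F | x ^ n = 1}
      = #{u : Fˣ | u ^ n = 1} := by rw [h_units, card_map]
    _ = Nat.card (powMonoidHom n : Fˣ →* Fˣ).ker := by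
      simp [Nat.card_eq_fintype_card, Fintype.card_subtype, MonoidHom.mem_ker]
    _ = (Nat.card Fˣ).gcd n := IsCyclic.card_powMonoidHom_ker Fˣ n
    _ = (Fintype.card F - 1).gcd n := by rw [Nat.card_units, Nat.card_eq_fintype_card]

theorem card_filter_inv_eq_pow {F : Type*} [Field F] [Fintype F] [DecidableEq F]
    {k : ℕ} (hk : k ≠ 0) :
    #{x : F | x⁻¹ = x ^ k} = (Fintype.card F - 1).gcd (k + 1) + 1 := by
  have h_insert : ({x | x⁻¹ = x ^ k} : Finset F) =
      insert 0 ({x | x ^ (k + 1) = 1} : Finset F) := by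
    ext x
    obtain rfl | hx := eq_or_ne x 0
    · simp [hk]
    · simp [hx, pow_succ, eq_comm (a := x⁻¹), ← mul_eq_one_iff_eq_inv₀ hx]
  rw [h_insert, card_insert_of_notMem (by simp), card_filter_pow_eq_one k.succ_ne_zero]

theorem cdu_aes_perturbed_ge_eighteen_general
    {F : Type*} [Field F] [Fintype F] [DecidableEq F] {k : ℕ} (hk : k ≠ 0)
    (G : F → F) (hG : ∀ x : F, G x = x⁻¹ - x ^ k) {c : F} (hc : c ≠ 1) :
    (Fintype.card F - 1).gcd (k + 1) + 1 ≤ cdu G c := by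
  simpa only [hG, sub_eq_zero, card_filter_inv_eq_pow hk] using card_filter_eq_le_cdu G hc 0

theorem cdu_aes_perturbed_ge_eighteen
    {F : Type*} [Field F] [Fintype F] [DecidableEq F]
    (hF : Fintype.card F = 2 ^ 8)
    (G : F → F) (hG : ∀ x : F, G x = x ^ 254 + x ^ 16) :
    ∃ c : F, c ≠ 1 ∧ 18 ≤ cdu G c := by
  have : CharP F 2 := charP_of_card_eq_prime_pow hF
  have hG_inv (x : F) : G x = x⁻¹ - x ^ 16 := by
    have h_exp : 254 = Fintype.card F - 2 := by simp [hF]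
    rw [hG, h_exp, pow_card_sub_two_eq_inv (by simp [hF]), CharTwo.sub_eq_add]
  refine ⟨0, zero_ne_one, ?_⟩
  simpa [hF] using cdu_aes_perturbed_ge_eighteen_general (by norm_num) G hG_inv zero_ne_one
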